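/- For every n > 1, the number of α-equivalence classes of closed linear lambda terms with n total applications and abstractions equals the number of isomorphism classes of classical rooted trivalent maps with n − 1 trivalent vertices. -/

import Mathlib

/-! ## Lambda terms and linearity -/

inductive Term : Type
  | var : ℕ → Term
  | app : Term → Term → Term
  | lam : ℕ → Term → Term
deriving DecidableEq

namespace Term

/-- total number of applications and abstractions -/
def size : Term → ℕ
  | var _ => 0
  | app t u => size t + size u + 1
  | lam _ t => size t + 1

def apps : Term → ℕ
  | var _ => 0
  | app t u => apps t + apps u + 1
  | lam _ t => apps t

def lams : Term → ℕ
  | var _ => 0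
  | app t u => lams t + lams u
  | lam _ t => lams t + 1

/-- all variable names occurring in a term (free, bound or binding) -/
def varsList : Term → List ℕ
  | var z => [z]
  | app t u => varsList t ++ varsList u
  | lam z t => z :: varsList t

/-- the list of free variables -/
def freeList : Term → List ℕ
  | var z => [z]
  | app t u => freeList t ++ freeList u
  | lam z t => (freeList t).filter (fun y => y ≠ z)

/-- the list of bound (binder) variables -/
def boundVars : Term → List ℕ
  | var _ => []
  | app t u => boundVars t ++ boundVars u
  | lam z t => z :: boundVars t

/-- rename the free occurrences of `x` to `y` -/
def rename (x y : ℕ) : Term → Term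
  | var z => if z = x then var y else var z
  | app t u => app (rename x y t) (rename x y u)
  | lam z t => if z = x then lam z t else lam z (rename x y t)

/-- substitution of `u` for the free occurrences of `x` -/
def subst (u : Term) (x : ℕ) : Term → Term
  | var z => if z = x then u else var z
  | app t₁ t₂ => app (subst u x t₁) (subst u x t₂)
  | lam z t => if z = x then lam z t else lam z (subst u x t)

end Term

/-- the linearity relation `Γ ⊢ t` between contexts and lambda terms -/
inductive Linear : List ℕ → Term → Prop
  | var (x : ℕ) : Linear [x] (.var x)
  | app {Γ Δ : List ℕ} {t u : Term} : Linear Γ t → Linear Δ u →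
      (Γ ++ Δ).Nodup → Linear (Γ ++ Δ) (.app t u)
  | lam {Γ : List ℕ} {x : ℕ} {t : Term} : Linear (Γ ++ [x]) t → Linear Γ (.lam x t)
  | exch {Γ Δ : List ℕ} {x y : ℕ} {t : Term} :
      Linear (Γ ++ y :: x :: Δ) t → Linear (Γ ++ x :: y :: Δ) t

/-! ## Alpha equivalence -/

/-- change of a bound variable somewhere inside a term -/
inductive BoundStep : Term → Term → Prop
  | here {x y : ℕ} {u : Term} : y ∉ u.varsList →
      BoundStep (.lam x u) (.lam y (u.rename x y))
  | appL {t t' u : Term} : BoundStep t t' → BoundStep (.app t u) (.app t' u)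
  | appR {t u u' : Term} : BoundStep u u' → BoundStep (.app t u) (.app t u')
  | lam {x : ℕ} {t t' : Term} : BoundStep t t' → BoundStep (.lam x t) (.lam x t')

/-- a single change of a free or bound variable -/
inductive AlphaStep : List ℕ × Term → List ℕ × Term → Prop
  | free {Γ₁ Γ₂ : List ℕ} {x y : ℕ} {t : Term} :
      y ∉ t.varsList → y ∉ Γ₁ → y ∉ Γ₂ →
      AlphaStep (Γ₁ ++ x :: Γ₂, t) (Γ₁ ++ y :: Γ₂, t.rename x y)
  | bound {Γ : List ℕ} {t t' : Term} : BoundStep t t' → AlphaStep (Γ, t) (Γ, t')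

/-- alpha equivalence of linear lambda terms-in-context -/
def Alpha : List ℕ × Term → List ℕ × Term → Prop := Relation.EqvGen AlphaStep


/-- the data of a classical rooted trivalent map -/
structure CMap : Type 1 where
  carrier : Type
  v : carrier → carrier
  e : carrier → carrier
  root : carrier

/-- `M` is a classical rooted trivalent map: a transitive
`Γ₃ = ⟨v, e ∣ v³ = e² = 1⟩`-set on which `v` and `e` act without fixed
points, with a distinguished root element -/
structure IsCMap (M : CMap) : Prop where
  v_cube : ∀ x, M.v (M.v (M.v x)) = x
  e_sq : ∀ x, M.e (M.e x) = x
  trans : ∀ x y, Relation.EqvGen (fun a b => M.v a = b ∨ M.e a = b) x y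
  v_free : ∀ x, M.v x ≠ x
  e_free : ∀ x, M.e x ≠ x

/-- isomorphism of classical rooted trivalent maps -/
def CIso (M M' : CMap) : Prop :=
  ∃ h : M.carrier ≃ M'.carrier,
    (∀ x, h (M.v x) = M'.v (h x)) ∧ (∀ x, h (M.e x) = M'.e (h x)) ∧
    h M.root = M'.root

/-- closed linear lambda terms with `n` total applications and abstractions -/
def ClosedLin (n : ℕ) :=
  {p : List ℕ × Term // Linear p.1 p.2 ∧ p.1 = [] ∧ Term.size p.2 = n}

/-- classical rooted trivalent maps with `m` trivalent vertices -/
def ClassicalRTM (m : ℕ) := {M : CMap // IsCMap M ∧ Nat.card M.carrier = 3 * m}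

/-! Attaching a new edge to the middle of the root edge of a classical map turns it into a planted
map: a connected trivalent map whose only leaf is its root. More generally, consider a connected map
rooted at a leaf, whose other leaves carry names. If the root edge ends in another leaf, the map is
read as a variable. Otherwise it ends in a trivalent vertex, and removing this vertex leaves either
two components, which are the two parts of an application, or a single one, which is the body of an
abstraction, its bound variable being the additional leaf. The term read is unique up to the choice
of the bound names, and it determines the map up to isomorphism, since the map can be rebuilt by
joining leaves along the term. So closed terms of size `n` correspond to planted maps with `n`
vertices. The one planted map not coming from a classical map is the loop read as `λx[x]`. -/

open Function

variable {D D' X Y : Type*}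

/-! ## Trivalent maps with leaves -/

/-- A trivalent map with leaves, on a set of darts: `v` rotates the darts around the vertices, its
fixed points being the univalent vertices (leaves), and `e` exchanges the two darts of an edge. -/
structure IsLeafedMap (v e : D → D) : Prop where
  v_cube : ∀ x, v (v (v x)) = x
  e_sq : ∀ x, e (e x) = x
  e_free : ∀ x, e x ≠ x

/-- Two darts lie in the same connected component; this is the relation in `IsCMap.trans`. -/
def SameComponent (v e : D → D) : D → D → Prop :=
  Relation.EqvGen (fun a b => v a = b ∨ e a = b)

/-- An equivariant injection between sets of darts. -/
structure IsMapEmbedding (v e : D → D) (v' e' : D' → D') (f : D → D') : Prop where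
  injective : Injective f
  map_v : Semiconj f v v'
  map_e : Semiconj f e e'

open Classical in
/-- The rotation left after removing the vertex of the dart `d`: the darts of that vertex become
leaves. The set of darts is unchanged, so that a map and its pieces share one carrier. -/
noncomputable def detach (v : D → D) (d : D) : D → D :=
  fun x => if x = d ∨ x = v d ∨ x = v (v d) then x else v x

/-- The leaves, other than `r`, of the component of the leaf `r`. -/
def otherLeaves (v e : D → D) (r : D) : Set D :=
  {y | SameComponent v e r y ∧ v y = y ∧ y ≠ r}

open Classical in
/-- The rotation after joining the leaves `a` and `b` to a new trivalent vertex, whose third dart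
`inr true` is matched by the edge involution `Sum.map e not` with the new leaf `inr false`. -/
noncomputable def joinLeaves (v : X → X) (a b : X) : X ⊕ Bool → X ⊕ Bool
  | .inl x => if x = a then .inl b else if x = b then .inr true else .inl (v x)
  | .inr true => .inl a
  | .inr false => .inr false

theorem detach_eq_self_iff {v : D → D} {d x : D} :
    detach v d x = x ↔ v x = x ∨ x = d ∨ x = v d ∨ x = v (v d) := by
  grind [detach]

namespace SameComponent

variable {v e : D → D} {x y z : D}

@[refl]
theorem refl (x : D) : SameComponent v e x x := Relation.EqvGen.refl x

theorem symm (h : SameComponent v e x y) : SameComponent v e y x := Relation.EqvGen.symm _ _ h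

theorem trans (h : SameComponent v e x y) (h' : SameComponent v e y z) : SameComponent v e x z :=
  Relation.EqvGen.trans _ _ _ h h'

theorem apply_v (h : SameComponent v e x y) : SameComponent v e x (v y) :=
  h.trans (Relation.EqvGen.rel _ _ (Or.inl rfl))

theorem apply_e (h : SameComponent v e x y) : SameComponent v e x (e y) :=
  h.trans (Relation.EqvGen.rel _ _ (Or.inr rfl))

theorem preserves (h : SameComponent v e x y) (hM : IsLeafedMap v e) {P : D → Prop}
    (hv : ∀ x, P x → P (v x)) (he : ∀ x, P x → P (e x)) (hx : P x) : P y := by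
  suffices P x ↔ P y from this.1 hx
  clear hx
  induction h with
  | rel x y h =>
    rcases h with rfl | rfl
    · exact ⟨hv x, fun h => hM.v_cube x ▸ hv _ (hv _ h)⟩
    · exact ⟨he x, fun h => hM.e_sq x ▸ he _ h⟩
  | refl x => rfl
  | symm x y _ ih => exact ih.symm
  | trans x y z _ _ ih₁ ih₂ => exact ih₁.trans ih₂

theorem of_detach {d : D} (h : SameComponent (detach v d) e x y) : SameComponent v e x y := by
  induction h with
  | rel x y h =>
    rcases h with rfl | rfl
    · rw [detach]
      split_ifs
      · exact refl _
      · exact (refl x).apply_v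
    · exact (refl x).apply_e
  | refl x => exact refl x
  | symm x y _ ih => exact ih.symm
  | trans x y z _ _ ih₁ ih₂ => exact ih₁.trans ih₂

end SameComponent

namespace IsLeafedMap

variable {v e : D → D} {r : D}

theorem v_injective (hM : IsLeafedMap v e) : Injective v := fun x y h => by
  rw [← hM.v_cube x, h, hM.v_cube]

theorem e_injective (hM : IsLeafedMap v e) : Injective e := Involutive.injective hM.e_sq

protected theorem detach (hM : IsLeafedMap v e) (d : D) : IsLeafedMap (detach v d) e := by
  refine ⟨fun x => ?_, hM.e_sq, hM.e_free⟩
  have hv {x y : D} (h : v x = v y) : x = y := hM.v_injective h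
  grind [_root_.detach, hM.v_cube]

theorem rootVertex_distinct (hM : IsLeafedMap v e) (hr : v r = r) (hd : v (e r) ≠ e r) :
    r ≠ e r ∧ v (e r) ≠ r ∧ v (v (e r)) ≠ r ∧ v (e r) ≠ e r ∧ v (v (e r)) ≠ e r ∧
      v (v (e r)) ≠ v (e r) := by
  have hv {x y : D} (h : v x = v y) : x = y := hM.v_injective h
  have := hM.e_free r
  have := hM.v_cube (e r)
  grind

theorem sameComponent_root_iff_of_edge (hM : IsLeafedMap v e) (hr : v r = r) (hd : v (e r) = e r)
    {x : D} : SameComponent v e r x ↔ x = r ∨ x = e r := by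
  refine ⟨fun h => h.preserves hM (P := fun x => x = r ∨ x = e r) ?_ ?_ (Or.inl rfl), ?_⟩
  · grind
  · grind [hM.e_sq]
  · rintro (rfl | rfl)
    · exact .refl _
    · exact (SameComponent.refl _).apply_e

theorem not_root_of_sameComponent_detach (hM : IsLeafedMap v e) (hr : v r = r)
    (hd : v (e r) ≠ e r) {x : D}
    (h : SameComponent (detach v (e r)) e (v (e r)) x ∨
      SameComponent (detach v (e r)) e (v (v (e r))) x) : x ≠ r ∧ x ≠ e r := by
  have hdist := hM.rootVertex_distinct hr hd
  have avoids {y : D} (hy : SameComponent (detach v (e r)) e y x) (hy' : y ≠ r ∧ y ≠ e r) :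
      x ≠ r ∧ x ≠ e r := by
    refine hy.preserves (hM.detach _) (P := fun x => x ≠ r ∧ x ≠ e r) ?_ ?_ hy'
    · have hv {x y : D} (h : v x = v y) : x = y := hM.v_injective h
      have := hM.v_cube (e r)
      grind [_root_.detach]
    · have he {x y : D} (h : e x = e y) : x = y := hM.e_injective h
      grind [hM.e_sq]
  rcases h with h | h <;> exact avoids h (by grind)

theorem sameComponent_root_iff (hM : IsLeafedMap v e) (hr : v r = r) {x : D} :
    SameComponent v e r x ↔ x = r ∨ x = e r ∨
      SameComponent (detach v (e r)) e (v (e r)) x ∨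
      SameComponent (detach v (e r)) e (v (v (e r))) x := by
  constructor
  · refine fun h => h.preserves hM (P := fun x => x = r ∨ x = e r ∨
      SameComponent (detach v (e r)) e (v (e r)) x ∨
      SameComponent (detach v (e r)) e (v (v (e r))) x)
      (fun x hx => ?_) (fun x hx => ?_) (Or.inl rfl)
    · by_cases hd : x = e r
      · exact hd ▸ Or.inr (Or.inr (Or.inl (.refl _)))
      by_cases ha : x = v (e r)
      · exact ha ▸ Or.inr (Or.inr (Or.inr (.refl _)))
      by_cases hb : x = v (v (e r))
      · exact Or.inr (Or.inl (hb ▸ hM.v_cube _))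
      have hx' : detach v (e r) x = v x := by simp [detach, hd, ha, hb]
      rcases hx with rfl | h | h | h
      · exact Or.inl hr
      · exact absurd h hd
      · exact Or.inr (Or.inr (Or.inl (hx' ▸ h.apply_v)))
      · exact Or.inr (Or.inr (Or.inr (hx' ▸ h.apply_v)))
    · rcases hx with rfl | rfl | h | h
      · exact Or.inr (Or.inl rfl)
      · exact Or.inl (hM.e_sq _)
      · exact Or.inr (Or.inr (Or.inl h.apply_e))
      · exact Or.inr (Or.inr (Or.inr h.apply_e))
  · have hd : SameComponent v e r (e r) := (SameComponent.refl r).apply_e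
    rintro (rfl | rfl | h | h)
    · exact .refl _
    · exact hd
    · exact hd.apply_v.trans h.of_detach
    · exact hd.apply_v.apply_v.trans h.of_detach

theorem otherLeaves_of_edge (hM : IsLeafedMap v e) (hr : v r = r) (hd : v (e r) = e r) :
    otherLeaves v e r = {e r} := by
  ext y
  have := hM.e_free r
  simp only [otherLeaves, Set.mem_ofPred_eq, hM.sameComponent_root_iff_of_edge hr hd,
    Set.mem_singleton_iff]
  grind

theorem otherLeaves_of_not_sameComponent (hM : IsLeafedMap v e) (hr : v r = r) (hd : v (e r) ≠ e r)
    (h : ¬ SameComponent (detach v (e r)) e (v (e r)) (v (v (e r)))) :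
    otherLeaves v e r = otherLeaves (detach v (e r)) e (v (e r)) ∪
      otherLeaves (detach v (e r)) e (v (v (e r))) := by
  ext y
  have hdist := hM.rootVertex_distinct hr hd
  have hy := hM.not_root_of_sameComponent_detach hr hd (x := y)
  have hl : SameComponent (detach v (e r)) e (v (e r)) y → y ≠ v (v (e r)) := fun h' hy =>
    h (hy ▸ h')
  have hr' : SameComponent (detach v (e r)) e (v (v (e r))) y → y ≠ v (e r) := fun h' hy =>
    h (hy ▸ h').symm
  simp only [otherLeaves, Set.mem_union, Set.mem_ofPred_eq, hM.sameComponent_root_iff hr,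
    detach_eq_self_iff]
  have hv {x y : D} (h : v x = v y) : x = y := hM.v_injective h
  grind [hM.v_cube]

theorem otherLeaves_detach_of_sameComponent (hM : IsLeafedMap v e) (hr : v r = r)
    (hd : v (e r) ≠ e r) (h : SameComponent (detach v (e r)) e (v (e r)) (v (v (e r)))) :
    otherLeaves (detach v (e r)) e (v (e r)) = insert (v (v (e r))) (otherLeaves v e r) := by
  ext y
  have hdist := hM.rootVertex_distinct hr hd
  have hy := hM.not_root_of_sameComponent_detach hr hd (x := y)
  have hl : SameComponent (detach v (e r)) e (v (v (e r))) y →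
      SameComponent (detach v (e r)) e (v (e r)) y := h.trans
  simp only [otherLeaves, Set.mem_insert_iff, Set.mem_ofPred_eq, hM.sameComponent_root_iff hr,
    detach_eq_self_iff]
  have hv {x y : D} (h : v x = v y) : x = y := hM.v_injective h
  grind [hM.v_cube]

end IsLeafedMap

namespace IsMapEmbedding

variable {v e : D → D} {v' e' : D' → D'} {f : D → D'}

theorem isLeafedMap (hf : IsMapEmbedding v e v' e' f) (hM : IsLeafedMap v' e') :
    IsLeafedMap v e where
  v_cube x := hf.injective (by simp only [hf.map_v.eq, hM.v_cube])
  e_sq x := hf.injective (by simp only [hf.map_e.eq, hM.e_sq])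
  e_free x h := hM.e_free (f x) (by rw [← hf.map_e, h])

theorem sameComponent_iff (hf : IsMapEmbedding v e v' e' f) (hM : IsLeafedMap v' e') {x y : D} :
    SameComponent v' e' (f x) (f y) ↔ SameComponent v e x y := by
  constructor
  · intro h
    obtain ⟨z, hz, hxz⟩ := h.preserves hM (P := fun w => ∃ z, f z = w ∧ SameComponent v e x z)
      (by rintro _ ⟨z, rfl, h⟩; exact ⟨v z, hf.map_v z, h.apply_v⟩)
      (by rintro _ ⟨z, rfl, h⟩; exact ⟨e z, hf.map_e z, h.apply_e⟩) ⟨x, rfl, .refl x⟩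
    exact hf.injective hz ▸ hxz
  · refine fun h => h.preserves (hf.isLeafedMap hM) (P := fun z => SameComponent v' e' (f x) (f z))
      (fun z hz => ?_) (fun z hz => ?_) (.refl _)
    · exact hf.map_v z ▸ hz.apply_v
    · exact hf.map_e z ▸ hz.apply_e

theorem surjective (hf : IsMapEmbedding v e v' e' f) (hM : IsLeafedMap v' e') {x : D}
    (hconn : ∀ y, SameComponent v' e' (f x) y) : Surjective f := fun y =>
  (hconn y).preserves hM (P := fun y => ∃ x, f x = y)
    (by rintro _ ⟨x, rfl⟩; exact ⟨v x, hf.map_v x⟩)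
    (by rintro _ ⟨x, rfl⟩; exact ⟨e x, hf.map_e x⟩) ⟨x, rfl⟩

protected theorem detach (hf : IsMapEmbedding v e v' e' f) (d : D) :
    IsMapEmbedding (detach v d) e (detach v' (f d)) e' f where
  injective := hf.injective
  map_v x := by
    have hinj {x y : D} (h : f x = f y) : x = y := hf.injective h
    have hv (x : D) : v' (f x) = f (v x) := (hf.map_v x).symm
    grind [_root_.detach]
  map_e := hf.map_e

protected theorem joinLeaves (hf : IsMapEmbedding v e v' e' f) (a b : D) :
    IsMapEmbedding (joinLeaves v a b) (Sum.map e not) (joinLeaves v' (f a) (f b)) (Sum.map e' not)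
      (Sum.map f id) where
  injective := Sum.map_injective.2 ⟨hf.injective, injective_id⟩
  map_v := by
    rintro (x | _ | _)
    · have hinj {x y : D} (h : f x = f y) : x = y := hf.injective h
      have hv (x : D) : v' (f x) = f (v x) := (hf.map_v x).symm
      grind [_root_.joinLeaves]
    · rfl
    · rfl
  map_e := by
    rintro (x | _) <;> simp [hf.map_e.eq]

end IsMapEmbedding

section JoinLeaves

variable {v e : X → X} {a b : X}

@[simp]
theorem joinLeaves_left : joinLeaves v a b (.inl a) = .inl b := by simp [joinLeaves]

theorem joinLeaves_eq_self_iff (hab : a ≠ b) {y : X ⊕ Bool} :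
    joinLeaves v a b y = y ↔ y = .inr false ∨ ∃ x, v x = x ∧ x ≠ a ∧ x ≠ b ∧ y = .inl x := by
  rcases y with x | _ | _ <;> simp only [joinLeaves] <;> grind

theorem IsMapEmbedding.inl_joinLeaves (ha : v a = a) (hb : v b = b) :
    IsMapEmbedding v e (detach (joinLeaves v a b) (.inr true)) (Sum.map e not) Sum.inl where
  injective := Sum.inl_injective
  map_v x := by grind [_root_.joinLeaves, _root_.detach]
  map_e _ := rfl

namespace IsLeafedMap

protected theorem joinLeaves (hM : IsLeafedMap v e) (ha : v a = a) (hb : v b = b) (hab : a ≠ b) :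
    IsLeafedMap (joinLeaves v a b) (Sum.map e not) where
  v_cube := by
    have hv {x y : X} (h : v x = v y) : x = y := hM.v_injective h
    rintro (x | _ | _)
    · have := hM.v_cube x
      grind [_root_.joinLeaves]
    · rfl
    · simp [_root_.joinLeaves, hab.symm]
  e_sq := by rintro (x | _) <;> simp [hM.e_sq]
  e_free := by rintro (x | _) <;> simp [hM.e_free]

theorem sameComponent_joinLeaves (hM : IsLeafedMap v e) (ha : v a = a) (hb : v b = b) (hab : a ≠ b)
    (hconn : ∀ x, SameComponent v e a x ∨ SameComponent v e b x) (y : X ⊕ Bool) :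
    SameComponent (joinLeaves v a b) (Sum.map e not) (.inr false) y := by
  have to_inr_true : SameComponent (joinLeaves v a b) (Sum.map e not) (.inr false) (.inr true) :=
    (SameComponent.refl _).apply_e
  have to_a : SameComponent (joinLeaves v a b) (Sum.map e not) (.inr false) (.inl a) :=
    to_inr_true.apply_v
  have to_b : SameComponent (joinLeaves v a b) (Sum.map e not) (.inr false) (.inl b) := by
    simpa using to_a.apply_v
  have extend {x x' : X} (h : SameComponent v e x x') :
      SameComponent (joinLeaves v a b) (Sum.map e not) (.inl x) (.inl x') :=
    (((IsMapEmbedding.inl_joinLeaves ha hb).sameComponent_iff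
      ((hM.joinLeaves ha hb hab).detach _)).2 h).of_detach
  rcases y with x | _ | _
  · exact (hconn x).elim (to_a.trans ∘ extend) (to_b.trans ∘ extend)
  · exact .refl _
  · exact to_inr_true

end IsLeafedMap

theorem IsMapEmbedding.elim_joinLeaves {v' e' : D → D} {r : D} {g : X → D}
    (hD : IsLeafedMap v' e') (hr : v' r = r) (hd : v' (e' r) ≠ e' r)
    (hg : IsMapEmbedding v e (detach v' (e' r)) e' g) (hga : g a = v' (e' r))
    (hgb : g b = v' (v' (e' r))) (hconn : ∀ x, SameComponent v e a x ∨ SameComponent v e b x) :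
    IsMapEmbedding (joinLeaves v a b) (Sum.map e not) v' e'
      (Sum.elim g fun c => bif c then e' r else r) := by
  have hM' := hD.detach (e' r)
  have hdist := hD.rootVertex_distinct hr hd
  have avoids (x : X) : g x ≠ r ∧ g x ≠ e' r := by
    refine hD.not_root_of_sameComponent_detach hr hd ((hconn x).imp ?_ ?_) <;> intro h
    · rwa [← hga, hg.sameComponent_iff hM']
    · rwa [← hgb, hg.sameComponent_iff hM']
  refine ⟨?_, ?_, ?_⟩
  · refine hg.injective.sumElim (fun c c' h => ?_) fun x c => ?_
    · cases c <;> cases c' <;> simp_all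
    · cases c <;> simp [avoids]
  · rintro (x | _ | _)
    · have hinj {x y : X} (h : g x = g y) : x = y := hg.injective h
      have hv := (hg.map_v x).symm
      have := hD.v_cube (e' r)
      grind [_root_.joinLeaves, _root_.detach]
    · exact hr.symm
    · exact hga
  · rintro (x | _ | _)
    · exact hg.map_e x
    · rfl
    · exact (hD.e_sq r).symm

end JoinLeaves

section DisjointUnion

variable {v e : X → X} {v' e' : Y → Y}

theorem IsMapEmbedding.inl : IsMapEmbedding v e (Sum.map v v') (Sum.map e e') Sum.inl :=
  ⟨Sum.inl_injective, fun _ => rfl, fun _ => rfl⟩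

theorem IsMapEmbedding.inr : IsMapEmbedding v' e' (Sum.map v v') (Sum.map e e') Sum.inr :=
  ⟨Sum.inr_injective, fun _ => rfl, fun _ => rfl⟩

theorem IsMapEmbedding.sumElim {w ε : D → D} {f : X → D} {g : Y → D}
    (hf : IsMapEmbedding v e w ε f) (hg : IsMapEmbedding v' e' w ε g) (hfg : ∀ x y, f x ≠ g y) :
    IsMapEmbedding (Sum.map v v') (Sum.map e e') w ε (Sum.elim f g) where
  injective := hf.injective.sumElim hg.injective hfg
  map_v := by
    rintro (x | y)
    exacts [hf.map_v x, hg.map_v y]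
  map_e := by
    rintro (x | y)
    exacts [hf.map_e x, hg.map_e y]

theorem IsLeafedMap.sumMap (hX : IsLeafedMap v e) (hY : IsLeafedMap v' e') :
    IsLeafedMap (Sum.map v v') (Sum.map e e') where
  v_cube := by rintro (x | y) <;> simp [hX.v_cube, hY.v_cube]
  e_sq := by rintro (x | y) <;> simp [hX.e_sq, hY.e_sq]
  e_free := by rintro (x | y) <;> simp [hX.e_free, hY.e_free]

theorem IsLeafedMap.not_sameComponent_inl_inr (hM : IsLeafedMap (Sum.map v v') (Sum.map e e'))
    (x : X) (y : Y) : ¬ SameComponent (Sum.map v v') (Sum.map e e') (.inl x) (.inr y) := fun h => by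
  simpa using h.preserves hM (P := fun z => z.isLeft) (by simp) (by simp) (by simp)

theorem IsLeafedMap.sameComponent_sumMap (hM : IsLeafedMap (Sum.map v v') (Sum.map e e'))
    {a : X} {b : Y} (ha : ∀ x, SameComponent v e a x) (hb : ∀ y, SameComponent v' e' b y)
    (z : X ⊕ Y) : SameComponent (Sum.map v v') (Sum.map e e') (.inl a) z ∨
      SameComponent (Sum.map v v') (Sum.map e e') (.inr b) z := by
  rcases z with x | y
  · exact Or.inl ((IsMapEmbedding.inl.sameComponent_iff hM).2 (ha x))
  · exact Or.inr ((IsMapEmbedding.inr.sameComponent_iff hM).2 (hb y))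

end DisjointUnion

/-! ## Linear terms -/

namespace Term

/-- Linearity without contexts: no variable is free in both parts of an application, and every
abstraction binds a variable that occurs. -/
def IsLinear : Term → Prop
  | var _ => True
  | app t u => t.IsLinear ∧ u.IsLinear ∧ t.freeList.Disjoint u.freeList
  | lam x t => t.IsLinear ∧ x ∈ t.freeList

theorem IsLinear.nodup_freeList {t : Term} (ht : t.IsLinear) : t.freeList.Nodup := by
  induction t with
  | var x => exact List.nodup_singleton x
  | app t u iht ihu => exact (iht ht.1).append (ihu ht.2.1) ht.2.2
  | lam x t ih => exact (ih ht.1).filter _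

theorem mem_freeList_lam {x y : ℕ} {t : Term} :
    y ∈ (lam x t).freeList ↔ y ∈ t.freeList ∧ y ≠ x := by
  simp [freeList]

end Term

namespace Linear

variable {Γ Δ : List ℕ} {t : Term}

theorem nodup (h : Linear Γ t) : Γ.Nodup := by
  induction h with
  | var x => exact List.nodup_singleton x
  | app _ _ h => exact h
  | lam _ ih => exact ih.of_append_left
  | exch _ ih => exact (((List.Perm.swap _ _ _).append_left _).nodup_iff).1 ih

theorem perm (h : Linear Γ t) (hp : Γ.Perm Δ) : Linear Δ t := by
  suffices ∀ Θ, Linear (Θ ++ Γ) t → Linear (Θ ++ Δ) t from this [] h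
  clear h
  induction hp with
  | nil => exact fun _ => id
  | cons x _ ih => exact fun Θ h => by simpa using ih (Θ ++ [x]) (by simpa using h)
  | swap x y l => exact fun Θ h => h.exch
  | trans _ _ ih₁ ih₂ => exact fun Θ h => ih₂ Θ (ih₁ Θ h)

theorem mem_freeList_iff (h : Linear Γ t) {x : ℕ} : x ∈ t.freeList ↔ x ∈ Γ := by
  induction h with
  | var y => rfl
  | app _ _ _ iht ihu => simp only [Term.freeList, List.mem_append, iht, ihu]
  | lam ht ih =>
    have := ht.nodup
    rw [Term.mem_freeList_lam, ih]
    grind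
  | exch _ ih =>
    rw [ih]
    simp only [List.mem_append, List.mem_cons]
    tauto

theorem isLinear (h : Linear Γ t) : t.IsLinear := by
  induction h with
  | var => trivial
  | app ht hu hd iht ihu =>
    refine ⟨iht, ihu, fun x hxt hxu => ?_⟩
    exact List.disjoint_of_nodup_append hd (ht.mem_freeList_iff.1 hxt) (hu.mem_freeList_iff.1 hxu)
  | lam ht ih => exact ⟨ih, ht.mem_freeList_iff.2 (by simp)⟩
  | exch _ ih => exact ih

end Linear

theorem Term.IsLinear.linear_freeList {t : Term} (ht : t.IsLinear) : Linear t.freeList t := by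
  induction t with
  | var x => exact .var x
  | app t u iht ihu => exact (iht ht.1).app (ihu ht.2.1) ht.nodup_freeList
  | lam x t ih =>
    refine .lam ((ih ht.1).perm ((List.perm_ext_iff_of_nodup ht.1.nodup_freeList ?_).2 fun y => ?_))
    · exact ht.nodup_freeList.append (List.nodup_singleton x) (by simp [freeList])
    · have := ht.2
      rw [List.mem_append, mem_freeList_lam]
      grind

theorem linear_nil_iff {t : Term} : Linear [] t ↔ t.IsLinear ∧ t.freeList = [] := by
  refine ⟨fun h => ⟨h.isLinear, List.eq_nil_iff_forall_not_mem.2 fun x => ?_⟩, fun h => ?_⟩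
  · simp [h.mem_freeList_iff]
  · exact h.2 ▸ h.1.linear_freeList

namespace Term

/-- Terms that differ by changes of bound variables; for closed terms this is `Alpha`. -/
def AlphaEquiv : Term → Term → Prop := Relation.EqvGen BoundStep

namespace AlphaEquiv

theorem trans {t u w : Term} (h : AlphaEquiv t u) (h' : AlphaEquiv u w) : AlphaEquiv t w :=
  Relation.EqvGen.trans _ _ _ h h'

theorem symm {t u : Term} (h : AlphaEquiv t u) : AlphaEquiv u t := Relation.EqvGen.symm _ _ h

theorem map {F : Term → Term} (hF : ∀ {t t'}, BoundStep t t' → BoundStep (F t) (F t')) {t t' : Term}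
    (h : AlphaEquiv t t') : AlphaEquiv (F t) (F t') := by
  induction h with
  | rel _ _ h => exact .rel _ _ (hF h)
  | refl => exact .refl _
  | symm _ _ _ ih => exact ih.symm
  | trans _ _ _ _ _ ih₁ ih₂ => exact ih₁.trans ih₂

theorem app {t t' u u' : Term} (ht : AlphaEquiv t t') (hu : AlphaEquiv u u') :
    AlphaEquiv (t.app u) (t'.app u') :=
  (ht.map (F := (Term.app · u)) .appL).trans (hu.map .appR)

theorem lam {t t' : Term} (x : ℕ) (h : AlphaEquiv t t') : AlphaEquiv (.lam x t) (.lam x t') :=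
  h.map .lam

theorem lam_rename {t : Term} (x : ℕ) {y : ℕ} (hy : y ∉ t.varsList) :
    AlphaEquiv (.lam x t) (.lam y (t.rename x y)) :=
  .rel _ _ (.here hy)

end AlphaEquiv

theorem size_rename (x y : ℕ) (t : Term) : (t.rename x y).size = t.size := by
  induction t with
  | var z => rw [rename]; split_ifs <;> rfl
  | app t u iht ihu => simp only [rename, size, iht, ihu]
  | lam z t ih => rw [rename]; split_ifs <;> simp only [size, ih]

theorem mem_varsList_of_mem_freeList {x : ℕ} {t : Term} (h : x ∈ t.freeList) : x ∈ t.varsList := by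
  induction t with
  | var z => exact h
  | app t u iht ihu => exact List.mem_append.2 ((List.mem_append.1 h).imp iht ihu)
  | lam z t ih => exact List.mem_cons_of_mem _ (ih (mem_freeList_lam.1 h).1)

theorem mem_freeList_of_mem_freeList_rename {x y z : ℕ} {t : Term}
    (h : z ∈ (t.rename x y).freeList) : z = y ∨ z ∈ t.freeList ∧ z ≠ x := by
  induction t with
  | var w => grind [rename, freeList]
  | app t u iht ihu =>
    rw [rename, freeList, List.mem_append] at h
    rw [freeList, List.mem_append]
    tauto
  | lam w t ih => grind [rename, freeList]

end Term

theorem alpha_nil_iff {t t' : Term} : Alpha ([], t) ([], t') ↔ t.AlphaEquiv t' := by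
  constructor
  · suffices ∀ {p q : List ℕ × Term}, Alpha p q →
        (p.1 = [] ↔ q.1 = []) ∧ (p.1 = [] → p.2.AlphaEquiv q.2) from fun h => (this h).2 rfl
    intro p q h
    induction h with
    | rel _ _ h =>
      cases h with
      | free => simp
      | bound h => exact ⟨Iff.rfl, fun _ => .rel _ _ h⟩
    | refl => exact ⟨Iff.rfl, fun _ => .refl _⟩
    | symm _ _ _ ih => exact ⟨ih.1.symm, fun h => (ih.2 (ih.1.2 h)).symm⟩
    | trans _ _ _ _ _ ih₁ ih₂ =>
      exact ⟨ih₁.1.trans ih₂.1, fun h => (ih₁.2 h).trans (ih₂.2 (ih₁.1.1 h))⟩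
  · intro h
    induction h with
    | rel _ _ h => exact .rel _ _ (.bound h)
    | refl => exact .refl _
    | symm _ _ _ ih => exact .symm _ _ ih
    | trans _ _ _ _ _ ih₁ ih₂ => exact .trans _ _ _ ih₁ ih₂

/-! ## Reading a term off a map -/

/-- The term `t` describes the component of the leaf `r`, the free variable `x` of `t` standing for
the leaf `ρ x`. The vertex of `e r`, with darts `e r`, `v (e r)` and `v (v (e r))`, is read as an
application or as an abstraction according to whether removing it separates its other two darts. -/
def Term.Reads : Term → (D → D) → (D → D) → D → (ℕ → D) → Prop
  | .var x, v, e, r, ρ => v r = r ∧ v (e r) = e r ∧ ρ x = e r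
  | .app t u, v, e, r, ρ => v r = r ∧ v (e r) ≠ e r ∧
      ¬ SameComponent (detach v (e r)) e (v (e r)) (v (v (e r))) ∧
      t.Reads (detach v (e r)) e (v (e r)) ρ ∧ u.Reads (detach v (e r)) e (v (v (e r))) ρ
  | .lam x t, v, e, r, ρ => v r = r ∧ v (e r) ≠ e r ∧
      SameComponent (detach v (e r)) e (v (e r)) (v (v (e r))) ∧
      t.Reads (detach v (e r)) e (v (e r)) (update ρ x (v (v (e r))))

section Reads

variable {v e : D → D} {r : D} {ρ ρ' : ℕ → D}

namespace Term

namespace Reads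

theorem congr {t : Term} (h : t.Reads v e r ρ) (hρ : ∀ x ∈ t.freeList, ρ x = ρ' x) :
    t.Reads v e r ρ' := by
  induction t generalizing v r ρ ρ' with
  | var x => exact ⟨h.1, h.2.1, hρ x (List.mem_singleton_self x) ▸ h.2.2⟩
  | app t u iht ihu =>
    obtain ⟨hr, hd, hsep, ht, hu⟩ := h
    exact ⟨hr, hd, hsep, iht ht fun x hx => hρ x (List.mem_append_left _ hx),
      ihu hu fun x hx => hρ x (List.mem_append_right _ hx)⟩
  | lam y t ih =>
    obtain ⟨hr, hd, hsep, ht⟩ := h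
    refine ⟨hr, hd, hsep, ih ht fun x hx => ?_⟩
    by_cases hxy : x = y
    · rw [hxy, update_self, update_self]
    · rw [update_of_ne hxy, update_of_ne hxy, hρ x (mem_freeList_lam.2 ⟨hx, hxy⟩)]

theorem map {v' e' : D' → D'} {f : D → D'} {t : Term} (h : t.Reads v e r ρ)
    (hf : IsMapEmbedding v e v' e' f) (hM : IsLeafedMap v' e') : t.Reads v' e' (f r) (f ∘ ρ) := by
  induction t generalizing v v' r ρ with
  | var x =>
    obtain ⟨hr, hd, hx⟩ := h
    exact ⟨by rw [← hf.map_v, hr], by rw [← hf.map_e, ← hf.map_v, hd],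
      by rw [comp_apply, hx, hf.map_e]⟩
  | app t u iht ihu =>
    obtain ⟨hr, hd, hsep, ht, hu⟩ := h
    rw [Reads, ← hf.map_e.eq, ← hf.map_v.eq, ← hf.map_v.eq, ← hf.map_v.eq, hf.injective.ne_iff,
      (hf.detach _).sameComponent_iff (hM.detach _)]
    exact ⟨congrArg f hr, hd, hsep, iht ht (hf.detach _) (hM.detach _),
      ihu hu (hf.detach _) (hM.detach _)⟩
  | lam x t ih =>
    obtain ⟨hr, hd, hsep, ht⟩ := h
    rw [Reads, ← hf.map_e.eq, ← hf.map_v.eq, ← hf.map_v.eq, ← hf.map_v.eq, hf.injective.ne_iff,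
      (hf.detach _).sameComponent_iff (hM.detach _), ← comp_update]
    exact ⟨congrArg f hr, hd, hsep, ih ht (hf.detach _) (hM.detach _)⟩

end Reads

theorem reads_rename_iff {t : Term} {x y : ℕ} (hy : y ∉ t.varsList) :
    (t.rename x y).Reads v e r ρ ↔ t.Reads v e r (update ρ x (ρ y)) := by
  induction t generalizing v r ρ with
  | var z => by_cases h : z = x <;> simp [rename, h, Reads]
  | app t u iht ihu =>
    rw [varsList, List.mem_append, not_or] at hy
    simp only [rename, Reads, iht hy.1, ihu hy.2]
  | lam z t ih =>
    rw [varsList, List.mem_cons, not_or] at hy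
    by_cases h : z = x
    · simp only [rename, h, if_true, Reads, update_idem]
    · simp only [rename, h, if_false, Reads, ih hy.2, update_of_ne hy.1, update_comm h]

theorem reads_update_iff_of_notMem {t : Term} {x : ℕ} (hx : x ∉ t.freeList) {d : D} :
    t.Reads v e r (update ρ x d) ↔ t.Reads v e r ρ := by
  have hρ : ∀ y ∈ t.freeList, update ρ x d y = ρ y := fun y hy =>
    update_of_ne (ne_of_mem_of_not_mem hy hx) _ _
  exact ⟨fun h => h.congr hρ, fun h => h.congr fun y hy => (hρ y hy).symm⟩

theorem reads_rename_update_iff {t : Term} {x y : ℕ} (hy : y ∉ t.varsList) {d : D} :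
    (t.rename x y).Reads v e r (update ρ y d) ↔ t.Reads v e r (update ρ x d) := by
  rw [reads_rename_iff hy, update_self]
  by_cases hxy : x = y
  · rw [hxy, update_idem]
  · rw [update_comm (Ne.symm hxy), reads_update_iff_of_notMem (mt mem_varsList_of_mem_freeList hy)]

end Term

theorem BoundStep.reads_iff {t t' : Term} (h : BoundStep t t') :
    t.Reads v e r ρ ↔ t'.Reads v e r ρ := by
  induction h generalizing v r ρ with
  | here hy => simp only [Term.Reads, Term.reads_rename_update_iff hy]
  | appL _ ih => simp only [Term.Reads, ih]
  | appR _ ih => simp only [Term.Reads, ih]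
  | lam _ ih => simp only [Term.Reads, ih]

theorem Term.AlphaEquiv.reads_iff {t t' : Term} (h : t.AlphaEquiv t') :
    t.Reads v e r ρ ↔ t'.Reads v e r ρ := by
  induction h with
  | rel _ _ h => exact h.reads_iff
  | refl => rfl
  | symm _ _ _ ih => exact ih.symm
  | trans _ _ _ _ _ ih₁ ih₂ => exact ih₁.trans ih₂

end Reads

/-- The names in `S` stand for distinct leaves under the assignment `ρ`. -/
structure LabelsLeaves (v : D → D) (ρ : ℕ → D) (S : Set ℕ) : Prop where
  injOn : Set.InjOn ρ S
  isLeaf : ∀ x ∈ S, v (ρ x) = ρ x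

namespace LabelsLeaves

variable {v : D → D} {ρ : ℕ → D} {S : Set ℕ}

protected theorem detach (h : LabelsLeaves v ρ S) (d : D) : LabelsLeaves (detach v d) ρ S :=
  ⟨h.injOn, fun x hx => detach_eq_self_iff.2 (Or.inl (h.isLeaf x hx))⟩

theorem update_insert (h : LabelsLeaves v ρ S) {d : D} (hd : v d = d) (hρ : ∀ x ∈ S, ρ x ≠ d)
    {z : ℕ} (hz : z ∉ S) : LabelsLeaves v (update ρ z d) (insert z S) := by
  have hS : Set.EqOn (update ρ z d) ρ S := fun x hx =>
    update_of_ne (ne_of_mem_of_not_mem hx hz) _ _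
  refine ⟨(Set.injOn_insert hz).2 ⟨h.injOn.congr hS.symm, ?_⟩, ?_⟩
  · rintro ⟨x, hx, hxd⟩
    exact hρ x hx (by rw [← hS hx, hxd, update_self])
  · rintro x (rfl | hx)
    · rw [update_self, hd]
    · rw [hS hx, h.isLeaf x hx]

end LabelsLeaves

namespace Term

variable {v e : D → D} {r : D} {ρ : ℕ → D}

theorem mem_insert_of_mem_freeList_rename {S : Set ℕ} {t : Term} {x z : ℕ}
    (h : ∀ y ∈ (lam x t).freeList, y ∈ S) : ∀ y ∈ (t.rename x z).freeList, y ∈ insert z S :=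
  fun _ hy => (mem_freeList_of_mem_freeList_rename hy).imp_right (h _ ∘ mem_freeList_lam.2)

theorem Reads.alphaEquiv (hM : IsLeafedMap v e) {t t' : Term} {S : Set ℕ} (hSfin : S.Finite)
    (hS : LabelsLeaves v ρ S) (ht : ∀ x ∈ t.freeList, x ∈ S) (ht' : ∀ x ∈ t'.freeList, x ∈ S)
    (h : t.Reads v e r ρ) (h' : t'.Reads v e r ρ) : t.AlphaEquiv t' := by
  induction hn : t.size using Nat.strong_induction_on generalizing t t' v r ρ S with
  | _ n ih =>
  subst hn
  match t, t', h, h' with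
  | var x, var x', h, h' =>
    obtain rfl : x = x' := hS.injOn (ht x (List.mem_singleton_self x))
      (ht' x' (List.mem_singleton_self x')) (h.2.2.trans h'.2.2.symm)
    exact .refl _
  | var _, app _ _, h, h' | var _, lam _ _, h, h' => exact absurd h.2.1 h'.2.1
  | app _ _, var _, h, h' | lam _ _, var _, h, h' => exact absurd h'.2.1 h.2.1
  | app _ _, lam _ _, h, h' => exact absurd h'.2.2.1 h.2.2.1
  | lam _ _, app _ _, h, h' => exact absurd h.2.2.1 h'.2.2.1
  | app t u, app t' u', h, h' =>
    obtain ⟨-, -, -, hst, hsu⟩ := h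
    obtain ⟨-, -, -, hst', hsu'⟩ := h'
    simp only [freeList, List.mem_append, or_imp, forall_and] at ht ht'
    exact AlphaEquiv.app
      (ih t.size (by grind [size]) (hM.detach _) hSfin (hS.detach _) ht.1 ht'.1 hst hst' rfl)
      (ih u.size (by grind [size]) (hM.detach _) hSfin (hS.detach _) ht.2 ht'.2 hsu hsu' rfl)
  | lam x t, lam x' t', h, h' =>
    obtain ⟨hr, hd, -, hst⟩ := h
    obtain ⟨-, -, -, hst'⟩ := h'
    obtain ⟨z, hz⟩ :=
      ((t.varsList.finite_toSet.union t'.varsList.finite_toSet).union hSfin).exists_notMem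
    obtain ⟨⟨hzt, hzt'⟩, hzS⟩ : (z ∉ t.varsList ∧ z ∉ t'.varsList) ∧ z ∉ S := by
      simpa only [Set.mem_union, Set.mem_ofPred_eq, not_or] using hz
    rw [← reads_rename_update_iff hzt] at hst
    rw [← reads_rename_update_iff hzt'] at hst'
    obtain ⟨-, -, -, -, hbranch, -⟩ := hM.rootVertex_distinct hr hd
    have hnew : ∀ y ∈ S, ρ y ≠ v (v (e r)) := fun y hy hyd =>
      hbranch (by simpa only [hyd, hM.v_cube, eq_comm] using hS.isLeaf y hy)
    have hlabels := (hS.detach (e r)).update_insert (detach_eq_self_iff.2 (by simp)) hnew hzS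
    have hbody := ih _ (by rw [size_rename]; exact Nat.lt_succ_self _) (hM.detach _)
      (hSfin.insert z) hlabels (mem_insert_of_mem_freeList_rename ht)
      (mem_insert_of_mem_freeList_rename ht') hst hst' rfl
    exact ((AlphaEquiv.lam_rename x hzt).trans (hbody.lam z)).trans
      (AlphaEquiv.lam_rename x' hzt').symm

theorem card_nonLeaf_detach_lt [Finite D] {d : D} (hd : v d ≠ d) :
    Nat.card {x // detach v d x ≠ x} < Nat.card {x // v x ≠ x} :=
  Set.ncard_lt_ncard (s := {x | detach v d x ≠ x}) (t := {x | v x ≠ x})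
    ⟨fun _ hx h => hx (detach_eq_self_iff.2 (Or.inl h)),
      fun h => h hd (detach_eq_self_iff.2 (Or.inr (Or.inl rfl)))⟩

theorem exists_reads [Finite D] (hM : IsLeafedMap v e) (hr : v r = r) {N : D → ℕ}
    (hN : LeftInverse ρ N) : ∃ t : Term, t.IsLinear ∧ t.Reads v e r ρ ∧
      ∀ z, z ∈ t.freeList ↔ z ∈ N '' otherLeaves v e r := by
  induction hn : Nat.card {x // v x ≠ x} using Nat.strong_induction_on generalizing v r with
  | _ n ih =>
  subst hn
  by_cases hd : v (e r) = e r
  · refine ⟨.var (N (e r)), trivial, ⟨hr, hd, hN _⟩, fun z => ?_⟩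
    rw [hM.otherLeaves_of_edge hr hd, Set.image_singleton]
    exact List.mem_singleton
  have hlt := card_nonLeaf_detach_lt hd
  obtain ⟨t, ht, htr, htf⟩ := ih _ hlt (hM.detach _) (r := v (e r))
    (detach_eq_self_iff.2 (by simp)) rfl
  by_cases hsep : SameComponent (detach v (e r)) e (v (e r)) (v (v (e r)))
  · refine ⟨.lam (N (v (v (e r)))) t, ⟨ht, ?_⟩, ⟨hr, hd, hsep, ?_⟩, fun z => ?_⟩
    · rw [htf, hM.otherLeaves_detach_of_sameComponent hr hd hsep]
      exact Set.mem_image_of_mem N (Set.mem_insert _ _)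
    · convert htr
      rw [update_eq_self_iff, hN]
    · have hnot : N (v (v (e r))) ∉ N '' otherLeaves v e r := by
        obtain ⟨-, -, -, -, hbranch, -⟩ := hM.rootVertex_distinct hr hd
        rw [hN.injective.mem_set_image]
        exact fun h => hbranch (h.2.1.symm.trans (hM.v_cube _))
      rw [mem_freeList_lam, htf, hM.otherLeaves_detach_of_sameComponent hr hd hsep,
        Set.image_insert_eq]
      grind
  · obtain ⟨u, hu, hur, huf⟩ := ih _ hlt (hM.detach _) (r := v (v (e r)))
      (detach_eq_self_iff.2 (by simp)) rfl
    refine ⟨.app t u, ⟨ht, hu, fun z hzt hzu => ?_⟩, ⟨hr, hd, hsep, htr, hur⟩, fun z => ?_⟩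
    · obtain ⟨y, hy, rfl⟩ := (htf z).1 hzt
      exact hsep (hy.1.trans ((hN.injective.mem_set_image.1 ((huf _).1 hzu)).1.symm))
    · rw [hM.otherLeaves_of_not_sameComponent hr hd hsep, Set.image_union, Set.mem_union, ← htf,
        ← huf]
      exact List.mem_append

end Term

/-! ## The map of a linear term -/

namespace Term

/-- The darts of the map of a linear term. The summand `Bool` is the edge at the root: `false` is
the root itself and `true` is the dart matched with it. -/
def Dart : Term → Type
  | var _ => Bool
  | app t u => (t.Dart ⊕ u.Dart) ⊕ Bool
  | lam _ t => t.Dart ⊕ Bool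

/-- The root leaf of the map of a term. -/
def rootDart : (t : Term) → t.Dart
  | var _ => false
  | app _ _ => .inr false
  | lam _ _ => .inr false

/-- The leaf standing for the free variable `x` (a junk dart if `x` is not free). -/
def leaf : (t : Term) → ℕ → t.Dart
  | var _, _ => true
  | app t u, x => .inl (if x ∈ t.freeList then .inl (t.leaf x) else .inr (u.leaf x))
  | lam _ t, x => .inl (t.leaf x)

/-- The rotation of the map of a term: an application joins the roots of its two parts, an
abstraction joins the root of its body to the leaf of the bound variable. -/
noncomputable def rotate : (t : Term) → t.Dart → t.Dart
  | var _ => id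
  | app t u => joinLeaves (Sum.map t.rotate u.rotate) (.inl t.rootDart) (.inr u.rootDart)
  | lam x t => joinLeaves t.rotate t.rootDart (t.leaf x)

/-- The edge involution of the map of a term. -/
def flip : (t : Term) → t.Dart → t.Dart
  | var _ => not
  | app t u => Sum.map (Sum.map t.flip u.flip) not
  | lam _ t => Sum.map t.flip not

/-- The map of a linear term; it is not classical, since its root is a leaf. -/
noncomputable def toMap (t : Term) : CMap := ⟨t.Dart, t.rotate, t.flip, t.rootDart⟩

instance finite_dart (t : Term) : Finite t.Dart := by
  induction t with
  | var x => exact inferInstanceAs (Finite Bool)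
  | app t u iht ihu => exact inferInstanceAs (Finite ((t.Dart ⊕ u.Dart) ⊕ Bool))
  | lam x t ih => exact inferInstanceAs (Finite (t.Dart ⊕ Bool))

theorem rotate_rootDart (t : Term) : t.rotate t.rootDart = t.rootDart := by
  cases t <;> rfl

theorem leaf_ne_rootDart (t : Term) (x : ℕ) : t.leaf x ≠ t.rootDart := by
  cases t with
  | var => exact Bool.noConfusion
  | app | lam => exact Sum.inl_ne_inr

theorem leaf_injOn (t : Term) : Set.InjOn t.leaf {x | x ∈ t.freeList} := by
  intro x hx y hy h
  induction t with
  | var z => exact (List.mem_singleton.1 hx).trans (List.mem_singleton.1 hy).symm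
  | app t u iht ihu =>
    grind [leaf, freeList]
  | lam z t ih =>
    exact ih (mem_freeList_lam.1 hx).1 (mem_freeList_lam.1 hy).1 (Sum.inl_injective h)

theorem leaf_app_left {t u : Term} {x : ℕ} (hx : x ∈ t.freeList) :
    (app t u).leaf x = .inl (.inl (t.leaf x)) := by
  rw [leaf, if_pos hx]

namespace IsLinear

theorem leaf_app_right {t u : Term} (h : (app t u).IsLinear) {x : ℕ} (hx : x ∈ u.freeList) :
    (app t u).leaf x = .inl (.inr (u.leaf x)) := by
  rw [leaf, if_neg fun hxt => h.2.2 hxt hx]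

theorem rotate_eq_self_iff {t : Term} (ht : t.IsLinear) {d : t.Dart} :
    t.rotate d = d ↔ d = t.rootDart ∨ ∃ x ∈ t.freeList, d = t.leaf x := by
  induction t with
  | var z =>
    refine iff_of_true rfl ?_
    cases d with
    | false => exact Or.inl rfl
    | true => exact Or.inr ⟨z, List.mem_singleton_self z, rfl⟩
  | app t u iht ihu =>
    have hne : (Sum.inl t.rootDart : t.Dart ⊕ u.Dart) ≠ .inr u.rootDart := Sum.inl_ne_inr
    refine (joinLeaves_eq_self_iff hne).trans (or_congr Iff.rfl ⟨?_, ?_⟩)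
    · rintro ⟨y | y, hy, hyt, hyu, rfl⟩
      · obtain rfl | ⟨x, hx, rfl⟩ := (iht ht.1).1 (Sum.inl_injective hy)
        · exact absurd rfl hyt
        · exact ⟨x, List.mem_append_left _ hx, (leaf_app_left hx).symm⟩
      · obtain rfl | ⟨x, hx, rfl⟩ := (ihu ht.2.1).1 (Sum.inr_injective hy)
        · exact absurd rfl hyu
        · exact ⟨x, List.mem_append_right _ hx, (leaf_app_right ht hx).symm⟩
    · rintro ⟨x, hx, rfl⟩
      rcases List.mem_append.1 hx with hx | hx
      · exact ⟨.inl (t.leaf x), congrArg Sum.inl ((iht ht.1).2 (Or.inr ⟨x, hx, rfl⟩)),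
          Sum.inl_injective.ne (t.leaf_ne_rootDart x), Sum.inl_ne_inr, leaf_app_left hx⟩
      · exact ⟨.inr (u.leaf x), congrArg Sum.inr ((ihu ht.2.1).2 (Or.inr ⟨x, hx, rfl⟩)),
          Sum.inr_ne_inl, Sum.inr_injective.ne (u.leaf_ne_rootDart x), leaf_app_right ht hx⟩
  | lam z t ih =>
    have hne : t.rootDart ≠ t.leaf z := (t.leaf_ne_rootDart z).symm
    refine (joinLeaves_eq_self_iff hne).trans (or_congr Iff.rfl ⟨?_, ?_⟩)
    · rintro ⟨y, hy, hyt, hyz, rfl⟩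
      obtain rfl | ⟨x, hx, rfl⟩ := (ih ht.1).1 hy
      · exact absurd rfl hyt
      · exact ⟨x, mem_freeList_lam.2 ⟨hx, fun h => hyz (congrArg t.leaf h)⟩, rfl⟩
    · rintro ⟨x, hx, rfl⟩
      obtain ⟨hx, hxz⟩ := mem_freeList_lam.1 hx
      exact ⟨t.leaf x, (ih ht.1).2 (Or.inr ⟨x, hx, rfl⟩), t.leaf_ne_rootDart x,
        t.leaf_injOn.ne hx ht.2 hxz, rfl⟩

theorem rotate_leaf {t : Term} (ht : t.IsLinear) {x : ℕ} (hx : x ∈ t.freeList) :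
    t.rotate (t.leaf x) = t.leaf x :=
  ht.rotate_eq_self_iff.2 (Or.inr ⟨x, hx, rfl⟩)

theorem isLeafedMap {t : Term} (ht : t.IsLinear) : IsLeafedMap t.rotate t.flip := by
  induction t with
  | var z => exact ⟨fun _ => rfl, Bool.not_not, Bool.not_ne_self⟩
  | app t u iht ihu =>
    exact ((iht ht.1).sumMap (ihu ht.2.1)).joinLeaves (congrArg Sum.inl t.rotate_rootDart)
      (congrArg Sum.inr u.rotate_rootDart) Sum.inl_ne_inr
  | lam z t ih =>
    exact (ih ht.1).joinLeaves t.rotate_rootDart (ht.1.rotate_leaf ht.2)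
      (t.leaf_ne_rootDart z).symm

theorem sameComponent_rootDart {t : Term} (ht : t.IsLinear) (d : t.Dart) :
    SameComponent t.rotate t.flip t.rootDart d := by
  induction t with
  | var z =>
    cases d with
    | false => exact .refl _
    | true => exact (SameComponent.refl _).apply_e
  | app t u iht ihu =>
    have hM := ht.1.isLeafedMap.sumMap ht.2.1.isLeafedMap
    have hroot : Sum.map t.rotate u.rotate (.inl t.rootDart) = .inl t.rootDart :=
      congrArg Sum.inl t.rotate_rootDart
    have hroot' : Sum.map t.rotate u.rotate (.inr u.rootDart) = .inr u.rootDart :=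
      congrArg Sum.inr u.rotate_rootDart
    exact hM.sameComponent_joinLeaves hroot hroot' Sum.inl_ne_inr
      (hM.sameComponent_sumMap (iht ht.1) (ihu ht.2.1)) d
  | lam z t ih =>
    exact ht.1.isLeafedMap.sameComponent_joinLeaves t.rotate_rootDart (ht.1.rotate_leaf ht.2)
      (t.leaf_ne_rootDart z).symm (fun y => Or.inl (ih ht.1 y)) d

theorem reads_leaf {t : Term} (ht : t.IsLinear) : t.Reads t.rotate t.flip t.rootDart t.leaf := by
  induction t with
  | var z => exact ⟨rfl, rfl, rfl⟩
  | app t u iht ihu =>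
    have hM := ht.1.isLeafedMap.sumMap ht.2.1.isLeafedMap
    have hM' := ht.isLeafedMap.detach (.inr true : (app t u).Dart)
    have hpart : IsMapEmbedding (Sum.map t.rotate u.rotate) (Sum.map t.flip u.flip)
        (detach (app t u).rotate (.inr true)) (app t u).flip Sum.inl :=
      .inl_joinLeaves (congrArg Sum.inl t.rotate_rootDart) (congrArg Sum.inr u.rotate_rootDart)
    have hu : (app t u).rotate (.inl (.inl t.rootDart)) = .inl (.inr u.rootDart) :=
      joinLeaves_left
    refine ⟨rfl, Sum.inl_ne_inr, ?_, ?_, ?_⟩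
    · refine hu ▸ (hpart.sameComponent_iff hM').not.2 (hM.not_sameComponent_inl_inr _ _)
    · exact (((iht ht.1).map .inl hM).map hpart hM').congr fun x hx => (leaf_app_left hx).symm
    · exact hu ▸ (((ihu ht.2.1).map .inr hM).map hpart hM').congr
        fun x hx => (leaf_app_right ht hx).symm
  | lam z t ih =>
    have hM' := ht.isLeafedMap.detach (.inr true : (lam z t).Dart)
    have hpart : IsMapEmbedding t.rotate t.flip
        (detach (lam z t).rotate (.inr true)) (lam z t).flip Sum.inl :=
      .inl_joinLeaves t.rotate_rootDart (ht.1.rotate_leaf ht.2)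
    have hz : (lam z t).rotate (.inl t.rootDart) = .inl (t.leaf z) := joinLeaves_left
    refine ⟨rfl, Sum.inl_ne_inr, ?_, ?_⟩
    · exact hz ▸ (hpart.sameComponent_iff hM').2 (ht.1.sameComponent_rootDart _)
    · have hleaf : update (lam z t).leaf z (.inl (t.leaf z)) = Sum.inl ∘ t.leaf :=
        update_eq_self z _
      exact hz ▸ hleaf ▸ (ih ht.1).map hpart hM'

theorem card_dart {t : Term} (ht : t.IsLinear) :
    Nat.card t.Dart = 3 * t.size + 1 + t.freeList.length := by
  induction t with
  | var z => exact (Nat.card_eq_fintype_card (α := Bool)).trans Fintype.card_bool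
  | app t u iht ihu =>
    have hcard : Nat.card (app t u).Dart = Nat.card t.Dart + Nat.card u.Dart + 2 := by
      rw [Dart, Nat.card_sum, Nat.card_sum, Nat.card_eq_fintype_card (α := Bool), Fintype.card_bool]
    rw [hcard, iht ht.1, ihu ht.2.1, size, freeList, List.length_append]
    ring
  | lam z t ih =>
    have hcard : Nat.card (lam z t).Dart = Nat.card t.Dart + 2 := by
      rw [Dart, Nat.card_sum, Nat.card_eq_fintype_card (α := Bool), Fintype.card_bool]
    have hfree : (lam z t).freeList = t.freeList.erase z :=
      (ht.1.nodup_freeList.erase_eq_filter z).symm ▸ List.filter_congr (by grind)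
    rw [hcard, ih ht.1, size, hfree]
    have := List.length_erase_add_one ht.2
    lia

end IsLinear

theorem flip_rootDart_ne_leaf {t : Term} (ht : 0 < t.size) (x : ℕ) :
    t.flip t.rootDart ≠ t.leaf x := by
  cases t with
  | var => exact absurd ht (lt_irrefl 0)
  | app | lam => exact Sum.inr_ne_inl

theorem Reads.exists_isMapEmbedding {v e : D → D} {r : D} {ρ : ℕ → D} {t : Term}
    (h : t.Reads v e r ρ) (hM : IsLeafedMap v e) (ht : t.IsLinear) :
    ∃ f, IsMapEmbedding t.rotate t.flip v e f ∧ f t.rootDart = r ∧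
      ∀ x ∈ t.freeList, f (t.leaf x) = ρ x := by
  induction t generalizing v r ρ with
  | var z =>
    obtain ⟨hr, hd, hz⟩ := h
    have hne := hM.e_free r
    refine ⟨fun c => bif c then e r else r, ⟨?_, ?_, ?_⟩, rfl, fun x hx => ?_⟩
    · rintro (_ | _) (_ | _) h
      exacts [rfl, absurd h.symm hne, absurd h hne, rfl]
    · rintro (_ | _)
      exacts [hr.symm, hd.symm]
    · rintro (_ | _)
      exacts [rfl, (hM.e_sq r).symm]
    · rw [List.mem_singleton.1 hx, hz]
      rfl
  | app t u iht ihu =>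
    obtain ⟨hr, hd, hsep, hreads, hreadsu⟩ := h
    have hM' := hM.detach (e r)
    obtain ⟨f, hf, hfr, hfleaf⟩ := iht hreads hM' ht.1
    obtain ⟨g, hg, hgr, hgleaf⟩ := ihu hreadsu hM' ht.2.1
    have hfg (x : t.Dart) (y : u.Dart) : f x ≠ g y := fun hxy => by
      have hx := (hf.sameComponent_iff hM').2 (ht.1.sameComponent_rootDart x)
      have hy := (hg.sameComponent_iff hM').2 (ht.2.1.sameComponent_rootDart y)
      rw [hfr] at hx
      rw [hgr, ← hxy] at hy
      exact hsep (hx.trans hy.symm)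
    have hconn := (ht.1.isLeafedMap.sumMap ht.2.1.isLeafedMap).sameComponent_sumMap
      ht.1.sameComponent_rootDart ht.2.1.sameComponent_rootDart
    refine ⟨_, (hf.sumElim hg hfg).elim_joinLeaves hM hr hd hfr hgr hconn, rfl, fun x hx => ?_⟩
    rcases List.mem_append.1 hx with hx | hx
    · exact leaf_app_left (u := u) hx ▸ hfleaf x hx
    · exact ht.leaf_app_right hx ▸ hgleaf x hx
  | lam z t ih =>
    obtain ⟨hr, hd, -, hreads⟩ := h
    obtain ⟨f, hf, hfr, hfleaf⟩ := ih hreads (hM.detach (e r)) ht.1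
    refine ⟨_, hf.elim_joinLeaves hM hr hd hfr ?_ fun y => Or.inl (ht.1.sameComponent_rootDart y),
      rfl, fun x hx => ?_⟩
    · rw [hfleaf z ht.2, update_self]
    · obtain ⟨hx, hxz⟩ := mem_freeList_lam.1 hx
      exact (hfleaf x hx).trans (update_of_ne hxz _ _)

end Term

theorem ciso_iff {M M' : CMap} : CIso M M' ↔
    ∃ f, IsMapEmbedding M.v M.e M'.v M'.e f ∧ Surjective f ∧ f M.root = M'.root :=
  ⟨fun ⟨h, hv, he, hr⟩ => ⟨h, ⟨h.injective, hv, he⟩, h.surjective, hr⟩,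
    fun ⟨_, hf, hsurj, hr⟩ => ⟨.ofBijective _ ⟨hf.injective, hsurj⟩, hf.map_v, hf.map_e, hr⟩⟩

theorem CIso.symm {M M' : CMap} : CIso M M' → CIso M' M := fun ⟨h, hv, he, hr⟩ =>
  ⟨h.symm, fun x => h.injective (by simp [hv]), fun x => h.injective (by simp [he]),
    h.symm_apply_eq.2 hr.symm⟩

theorem CIso.trans {M M' M'' : CMap} : CIso M M' → CIso M' M'' → CIso M M'' :=
  fun ⟨h, hv, he, hr⟩ ⟨h', hv', he', hr'⟩ => ⟨h.trans h', fun x => by simp [hv, hv'],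
    fun x => by simp [he, he'], by simp [hr, hr']⟩

theorem CIso.equivalence : Equivalence CIso :=
  ⟨fun _ => ⟨Equiv.refl _, fun _ => rfl, fun _ => rfl, rfl⟩, CIso.symm, CIso.trans⟩

namespace Term

theorem Reads.ciso_toMap {t : Term} {M : CMap} {ρ : ℕ → M.carrier}
    (h : t.Reads M.v M.e M.root ρ) (ht : t.IsLinear) (hM : IsLeafedMap M.v M.e)
    (hconn : ∀ x, SameComponent M.v M.e M.root x) : CIso t.toMap M := by
  obtain ⟨f, hf, hr, -⟩ := h.exists_isMapEmbedding hM ht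
  exact ciso_iff.2 ⟨f, hf, hf.surjective hM (x := t.rootDart) (hr ▸ hconn), hr⟩

theorem ciso_toMap_iff {t t' : Term} (ht : t.IsLinear) (ht' : t'.IsLinear) (hfree : t.freeList = [])
    (hfree' : t'.freeList = []) : CIso t.toMap t'.toMap ↔ t.AlphaEquiv t' := by
  constructor
  · intro h
    obtain ⟨f, hf, -, hr⟩ : ∃ f, IsMapEmbedding t.rotate t.flip t'.rotate t'.flip f ∧
        Surjective f ∧ f t.rootDart = t'.rootDart := ciso_iff.1 h
    have hreads : t.Reads t'.rotate t'.flip t'.rootDart t'.leaf :=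
      (hr ▸ ht.reads_leaf.map hf ht'.isLeafedMap).congr (by simp [hfree])
    exact hreads.alphaEquiv ht'.isLeafedMap Set.finite_empty ⟨Set.injOn_empty _, by simp⟩
      (by simp [hfree]) (by simp [hfree']) ht'.reads_leaf
  · intro h
    exact (h.reads_iff.2 ht'.reads_leaf).ciso_toMap (M := t'.toMap) ht ht'.isLeafedMap
      ht'.sameComponent_rootDart

end Term

/-! ## Planting classical maps -/

open Classical in
/-- The edge involution after cutting the edge of `o` in the middle: its darts `o` and `e o` are now
matched with the new leaves `inr false` and `inr true`. -/
noncomputable def subdivide (e : X → X) (o : X) : X ⊕ Bool → X ⊕ Bool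
  | .inl x => if x = o then .inr false else if x = e o then .inr true else .inl (e x)
  | .inr false => .inl o
  | .inr true => .inl (e o)

section Subdivide

variable {v e : X → X} {o : X}

protected theorem IsLeafedMap.subdivide (hM : IsLeafedMap v e) (o : X) :
    IsLeafedMap (Sum.map v id) (subdivide e o) where
  v_cube := by rintro (x | c) <;> simp [hM.v_cube]
  e_sq := by
    have he {x y : X} (h : e x = e y) : x = y := hM.e_injective h
    have := hM.e_free o
    rintro (x | _ | _)
    · have := hM.e_sq x
      grind [_root_.subdivide]
    · simp [_root_.subdivide]
    · simp [_root_.subdivide, hM.e_free]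
  e_free := by
    rintro (x | _ | _)
    · have := hM.e_free x
      grind [_root_.subdivide]
    · exact Sum.inl_ne_inr
    · exact Sum.inl_ne_inr

theorem IsLeafedMap.sameComponent_subdivide (hM : IsLeafedMap v e)
    (hconn : ∀ x, SameComponent v e o x) (y : X ⊕ Bool) :
    SameComponent (Sum.map v id) (subdivide e o) (.inr false) y ∨
      SameComponent (Sum.map v id) (subdivide e o) (.inr true) y := by
  have to_o : SameComponent (Sum.map v id) (subdivide e o) (.inr false) (.inl o) :=
    (SameComponent.refl _).apply_e
  have to_eo : SameComponent (Sum.map v id) (subdivide e o) (.inr true) (.inl (e o)) :=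
    (SameComponent.refl _).apply_e
  rcases y with x | _ | _
  · refine (hconn x).preserves hM
      (P := fun x => SameComponent (Sum.map v id) (subdivide e o) (.inr false) (.inl x) ∨
        SameComponent (Sum.map v id) (subdivide e o) (.inr true) (.inl x))
      (fun x hx => hx.imp .apply_v .apply_v) (fun x hx => ?_) (Or.inl to_o)
    by_cases hxo : x = o
    · exact Or.inr (hxo ▸ to_eo)
    by_cases hxo' : x = e o
    · exact Or.inl (by rwa [hxo', hM.e_sq])
    · have hstep : subdivide e o (.inl x) = .inl (e x) := by simp [subdivide, hxo, hxo']
      exact hstep ▸ hx.imp .apply_e .apply_e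
  · exact Or.inl (.refl _)
  · exact Or.inr (.refl _)

protected theorem IsMapEmbedding.subdivide {v' e' : Y → Y} {f : X → Y}
    (hf : IsMapEmbedding v e v' e' f) (o : X) :
    IsMapEmbedding (Sum.map v id) (subdivide e o) (Sum.map v' id) (subdivide e' (f o))
      (Sum.map f id) where
  injective := Sum.map_injective.2 ⟨hf.injective, injective_id⟩
  map_v := by
    rintro (x | c)
    exacts [congrArg Sum.inl (hf.map_v x), rfl]
  map_e := by
    have hinj {x y : X} (h : f x = f y) : x = y := hf.injective h
    have he (x : X) : e' (f x) = f (e x) := (hf.map_e x).symm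
    rintro (x | _ | _)
    · grind [_root_.subdivide]
    · rfl
    · exact congrArg Sum.inl (hf.map_e o)

end Subdivide

/-- The map with one leaf, its root, obtained from a classical map by attaching a new edge to the
middle of the root edge. -/
noncomputable def CMap.planted (M : CMap) : CMap where
  carrier := (M.carrier ⊕ Bool) ⊕ Bool
  v := joinLeaves (Sum.map M.v id) (.inr false) (.inr true)
  e := Sum.map (subdivide M.e M.root) not
  root := .inr false

namespace IsCMap

variable {M M' : CMap}

theorem isLeafedMap (hM : IsCMap M) : IsLeafedMap M.v M.e := ⟨hM.v_cube, hM.e_sq, hM.e_free⟩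

theorem isLeafedMap_planted (hM : IsCMap M) : IsLeafedMap M.planted.v M.planted.e :=
  (hM.isLeafedMap.subdivide M.root).joinLeaves rfl rfl (by simp)

theorem sameComponent_planted (hM : IsCMap M) (y : M.planted.carrier) :
    SameComponent M.planted.v M.planted.e M.planted.root y :=
  (hM.isLeafedMap.subdivide M.root).sameComponent_joinLeaves rfl rfl (by simp)
    (hM.isLeafedMap.sameComponent_subdivide (hM.trans M.root)) y

theorem planted_v_eq_self_iff (hM : IsCMap M) {y : M.planted.carrier} :
    M.planted.v y = y ↔ y = M.planted.root := by
  refine (joinLeaves_eq_self_iff (by simp)).trans (or_iff_left ?_)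
  rintro ⟨x | _ | _, hx, hxa, hxb, -⟩
  · exact hM.v_free x (Sum.inl_injective hx)
  · exact hxa rfl
  · exact hxb rfl

end IsCMap

theorem exists_equiv_of_sum_equiv {K : Type*} (h : X ⊕ K ≃ Y ⊕ K) (hK : ∀ k, h (.inr k) = .inr k) :
    ∃ g : X ≃ Y, ∀ x, h (.inl x) = .inl (g x) := by
  have hinl (x : X) : ∃ y, h (.inl x) = .inl y := by
    rcases hx : h (.inl x) with y | k
    · exact ⟨y, rfl⟩
    · exact absurd (h.injective (hx.trans (hK k).symm)) Sum.inl_ne_inr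
  choose g hg using hinl
  refine ⟨.ofBijective g ⟨fun x x' hxx' => ?_, fun y => ?_⟩, hg⟩
  · exact Sum.inl_injective (h.injective (by rw [hg, hg, hxx']))
  · obtain ⟨x | k, hx⟩ := h.surjective (.inl y)
    · exact ⟨x, Sum.inl_injective ((hg x).symm.trans hx)⟩
    · exact absurd (hx.symm.trans (hK k)) Sum.inl_ne_inr

section PlantedIso

variable {M M' : CMap}

theorem CIso.planted (h : CIso M M') : CIso M.planted M'.planted := by
  obtain ⟨f, hf, hsurj, hr⟩ := ciso_iff.1 h
  have hf' := (hf.subdivide M.root).joinLeaves (.inr false) (.inr true)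
  rw [hr] at hf'
  exact ciso_iff.2 ⟨_, hf', Sum.map_surjective.2
    ⟨Sum.map_surjective.2 ⟨hsurj, surjective_id⟩, surjective_id⟩, rfl⟩

theorem CIso.of_planted (hM : IsCMap M) (hM' : IsCMap M') (h : CIso M.planted M'.planted) :
    CIso M M' := by
  obtain ⟨h, hv, he, hr⟩ : ∃ h : (M.carrier ⊕ Bool) ⊕ Bool ≃ (M'.carrier ⊕ Bool) ⊕ Bool,
      (∀ x, h (joinLeaves (Sum.map M.v id) (.inr false) (.inr true) x) =
        joinLeaves (Sum.map M'.v id) (.inr false) (.inr true) (h x)) ∧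
      (∀ x, h (Sum.map (subdivide M.e M.root) not x) =
        Sum.map (subdivide M'.e M'.root) not (h x)) ∧ h (.inr false) = .inr false := h
  have hr' : h (.inr true) = .inr true := by simpa [hr] using he (.inr false)
  have ha : h (.inl (.inr false)) = .inl (.inr false) := by
    simpa [hr', joinLeaves] using hv (.inr true)
  have hb : h (.inl (.inr true)) = .inl (.inr true) := by simpa [ha] using hv (.inl (.inr false))
  obtain ⟨g, hg⟩ := exists_equiv_of_sum_equiv h (by rintro (_ | _) <;> assumption)
  obtain ⟨k, hk⟩ := exists_equiv_of_sum_equiv g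
    (by rintro (_ | _) <;> exact Sum.inl_injective ((hg _).symm.trans ‹_›))
  have hhk (x : M.carrier) : h (.inl (.inl x)) = .inl (.inl (k x)) := by rw [hg, hk]
  have hroot : k M.root = M'.root := by
    simpa [ha, hhk, subdivide] using he (.inl (.inr false))
  have heroot : k (M.e M.root) = M'.e M'.root := by
    simpa [hb, hhk, subdivide] using he (.inl (.inr true))
  refine ⟨k, fun x => ?_, fun x => ?_, hroot⟩
  · simpa [hhk, joinLeaves] using hv (.inl (.inl x))
  · by_cases hx : x = M.root
    · rw [hx, heroot, hroot]
    by_cases hx' : x = M.e M.root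
    · rw [hx', heroot, hM.e_sq, hM'.e_sq, hroot]
    · have hkx : k x ≠ M'.root := by rwa [← hroot, k.injective.ne_iff]
      have hkx' : k x ≠ M'.e M'.root := by rwa [← heroot, k.injective.ne_iff]
      simpa [hhk, subdivide, hx, hx', hkx, hkx'] using he (.inl (.inl x))

end PlantedIso

open Classical in
/-- The edge involution after removing the leaves `a` and `b` and gluing their edges into one. -/
noncomputable def weld (e : X → X) (a b x : X) : X :=
  if e x = a then e b else if e x = b then e a else e x

namespace IsLeafedMap

variable {v e : X → X} {a b : X}

theorem weld_ne (hM : IsLeafedMap v e) (hne : e a ≠ b) (x : X) :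
    weld e a b x ≠ a ∧ weld e a b x ≠ b := by
  have he {x y : X} (h : e x = e y) : x = y := hM.e_injective h
  have := hM.e_sq a
  have := hM.e_free a
  have := hM.e_free b
  grind [weld]

theorem weld_weld (hM : IsLeafedMap v e) (hab : a ≠ b) {x : X} (hx : x ≠ a ∧ x ≠ b) :
    weld e a b (weld e a b x) = x := by
  have := hM.e_sq x
  have := hM.e_sq a
  have := hM.e_sq b
  grind [weld]

theorem weld_ne_self (hM : IsLeafedMap v e) (hab : a ≠ b) (x : X) : weld e a b x ≠ x := by
  have := hM.e_free x
  have := hM.e_sq a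
  have := hM.e_sq b
  grind [weld]

end IsLeafedMap

section Weld

variable {X : Type} {v e : X → X} {a b : X}

/-- The classical map obtained from a map with exactly two leaves `a` and `b` by gluing the edges of
these leaves into one, which becomes the root edge. -/
noncomputable def weldedMap (hM : IsLeafedMap v e) (hleaf : ∀ x, v x = x ↔ x = a ∨ x = b)
    (hne : e a ≠ b) : CMap where
  carrier := {x : X // x ≠ a ∧ x ≠ b}
  v x := ⟨v x, by
    rw [← not_or, ← hleaf, hM.v_injective.eq_iff, hleaf, not_or]
    exact x.2⟩
  e x := ⟨weld e a b x, hM.weld_ne hne x⟩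
  root := ⟨e a, hM.e_free a, hne⟩

namespace IsLeafedMap

theorem sameComponent_weldedMap (hM : IsLeafedMap v e) (hleaf : ∀ x, v x = x ↔ x = a ∨ x = b)
    (hne : e a ≠ b) (hconn : ∀ x, SameComponent v e a x ∨ SameComponent v e b x)
    (x : (weldedMap hM hleaf hne).carrier) :
    SameComponent (weldedMap hM hleaf hne).v (weldedMap hM hleaf hne).e
      (weldedMap hM hleaf hne).root x := by
  have hva := (hleaf a).2 (Or.inl rfl)
  have hvb := (hleaf b).2 (Or.inr rfl)
  let P (x : X) : Prop := x = a ∨ x = b ∨ ∃ hx : x ≠ a ∧ x ≠ b,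
    SameComponent (weldedMap hM hleaf hne).v (weldedMap hM hleaf hne).e
      (weldedMap hM hleaf hne).root ⟨x, hx⟩
  have step_v (x : X) : P x → P (v x) := by
    rintro (rfl | rfl | ⟨hx, h⟩)
    · exact Or.inl hva
    · exact Or.inr (Or.inl hvb)
    · exact Or.inr (Or.inr ⟨_, h.apply_v⟩)
  have step_e (x : X) : P x → P (e x) := by
    have root_e : P (e a) := Or.inr (Or.inr ⟨_, .refl _⟩)
    have root_e' : P (weld e a b (e a)) := Or.inr (Or.inr ⟨_, (SameComponent.refl _).apply_e⟩)
    rintro (rfl | rfl | ⟨hx, h⟩)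
    · exact root_e
    · simpa [weld, hM.e_sq] using root_e'
    · by_cases hxa : e x = a
      · exact Or.inl hxa
      by_cases hxb : e x = b
      · exact Or.inr (Or.inl hxb)
      · have hP : P (weld e a b x) := Or.inr (Or.inr ⟨_, h.apply_e⟩)
        simpa [weld, hxa, hxb] using hP
  obtain ⟨x, hx⟩ := x
  obtain h | h | ⟨_, h⟩ : P x := (hconn x).elim
    (fun h => h.preserves hM step_v step_e (Or.inl rfl))
    (fun h => h.preserves hM step_v step_e (Or.inr (Or.inl rfl)))
  exacts [absurd h hx.1, absurd h hx.2, h]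

theorem isCMap_weldedMap (hM : IsLeafedMap v e) (hleaf : ∀ x, v x = x ↔ x = a ∨ x = b)
    (hne : e a ≠ b) (hab : a ≠ b) (hconn : ∀ x, SameComponent v e a x ∨ SameComponent v e b x) :
    IsCMap (weldedMap hM hleaf hne) := by
  refine ⟨fun ⟨x, _⟩ => Subtype.ext (hM.v_cube x), fun ⟨x, hx⟩ => Subtype.ext (hM.weld_weld hab hx),
    fun x y => ?_, fun ⟨x, hx⟩ h => ?_, fun ⟨x, _⟩ h => hM.weld_ne_self hab x (congrArg (·.1) h)⟩
  · exact (hM.sameComponent_weldedMap hleaf hne hconn x).symm.trans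
      (hM.sameComponent_weldedMap hleaf hne hconn y)
  · exact ((hleaf x).1 (congrArg Subtype.val h)).elim hx.1 hx.2

theorem isMapEmbedding_weldedMap (hM : IsLeafedMap v e) (hleaf : ∀ x, v x = x ↔ x = a ∨ x = b)
    (hne : e a ≠ b) (hab : a ≠ b) :
    IsMapEmbedding (Sum.map (weldedMap hM hleaf hne).v id)
      (subdivide (weldedMap hM hleaf hne).e (weldedMap hM hleaf hne).root) v e
      (Sum.elim Subtype.val fun c => bif c then b else a) := by
  refine ⟨Subtype.val_injective.sumElim ?_ ?_, ?_, ?_⟩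
  · rintro (_ | _) (_ | _) h
    exacts [rfl, absurd h hab, absurd h.symm hab, rfl]
  · rintro ⟨x, hx⟩ (_ | _)
    exacts [hx.1, hx.2]
  · rintro (x | _ | _)
    exacts [rfl, ((hleaf a).2 (Or.inl rfl)).symm, ((hleaf b).2 (Or.inr rfl)).symm]
  · have weld_root : weld e a b (e a) = e b := by simp [weld, hM.e_sq]
    rintro (⟨x, hx⟩ | _ | _)
    · by_cases hxa : x = e a
      · subst hxa
        simp [subdivide, weldedMap, hM.e_sq]
      by_cases hxb : x = e b
      · subst hxb
        simp [subdivide, weldedMap, hM.e_sq, weld_root, hM.e_injective.ne hab.symm]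
      · have hxa' : e x ≠ a := fun h => hxa (by rw [← h, hM.e_sq])
        have hxb' : e x ≠ b := fun h => hxb (by rw [← h, hM.e_sq])
        have weld_x : weld e a b x = e x := by simp [weld, hxa', hxb']
        simp [subdivide, weldedMap, weld_root, weld_x, hxa, hxb]
    · rfl
    · exact weld_root

theorem ciso_planted_weldedMap (hM : IsLeafedMap v e) (hleaf : ∀ x, v x = x ↔ x = a ∨ x = b)
    (hne : e a ≠ b) (hab : a ≠ b) :
    CIso (weldedMap hM hleaf hne).planted
      ⟨X ⊕ Bool, joinLeaves v a b, Sum.map e not, .inr false⟩ := by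
  have hf := hM.isMapEmbedding_weldedMap hleaf hne hab
  refine ciso_iff.2 ⟨_, hf.joinLeaves (.inr false) (.inr true), Sum.map_surjective.2
    ⟨fun x => ?_, surjective_id⟩, rfl⟩
  by_cases hxa : x = a
  · exact ⟨.inr false, hxa.symm⟩
  by_cases hxb : x = b
  · exact ⟨.inr true, hxb.symm⟩
  · exact ⟨.inl ⟨x, hxa, hxb⟩, rfl⟩

end IsLeafedMap

end Weld

namespace Term

theorem exists_planted_ciso_toMap {t : Term} (ht : t.IsLinear) (hfree : t.freeList = [])
    (hsize : 1 < t.size) : ∃ M, IsCMap M ∧ CIso M.planted t.toMap := by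
  cases t with
  | var x => exact absurd hsize (by simp [size])
  | app t u =>
    obtain ⟨hft, hfu⟩ := List.append_eq_nil_iff.1 hfree
    have hM := ht.1.isLeafedMap.sumMap ht.2.1.isLeafedMap
    have hleaf : ∀ x, Sum.map t.rotate u.rotate x = x ↔
        x = .inl t.rootDart ∨ x = .inr u.rootDart := by
      rintro (x | x)
      · simp [ht.1.rotate_eq_self_iff, hft]
      · simp [ht.2.1.rotate_eq_self_iff, hfu]
    exact ⟨_, hM.isCMap_weldedMap hleaf Sum.inl_ne_inr Sum.inl_ne_inr
      (hM.sameComponent_sumMap ht.1.sameComponent_rootDart ht.2.1.sameComponent_rootDart),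
      hM.ciso_planted_weldedMap hleaf Sum.inl_ne_inr Sum.inl_ne_inr⟩
  | lam x t =>
    have hM := ht.1.isLeafedMap
    have hleaf (d : t.Dart) : t.rotate d = d ↔ d = t.rootDart ∨ d = t.leaf x := by
      have hx : ∀ y ∈ t.freeList, y = x := by simpa [freeList] using hfree
      have := ht.2
      rw [ht.1.rotate_eq_self_iff]
      grind
    have hne := flip_rootDart_ne_leaf (Nat.lt_of_succ_lt_succ hsize) x
    have hab : t.rootDart ≠ t.leaf x := (t.leaf_ne_rootDart x).symm
    exact ⟨_, hM.isCMap_weldedMap hleaf hne hab fun y => Or.inl (ht.1.sameComponent_rootDart y),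
      hM.ciso_planted_weldedMap hleaf hne hab⟩

end Term

theorem IsCMap.exists_planted_ciso_toMap {M : CMap} [Finite M.carrier] (hM : IsCMap M) :
    ∃ t : Term, t.IsLinear ∧ t.freeList = [] ∧ CIso M.planted t.toMap := by
  have : Finite M.planted.carrier := inferInstanceAs (Finite ((M.carrier ⊕ Bool) ⊕ Bool))
  have : Nonempty M.planted.carrier := ⟨M.planted.root⟩
  obtain ⟨N, hN⟩ := Countable.exists_injective_nat M.planted.carrier
  obtain ⟨t, ht, hreads, hfree⟩ := Term.exists_reads hM.isLeafedMap_planted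
    (hM.planted_v_eq_self_iff.2 rfl) (leftInverse_invFun hN)
  have hnone : otherLeaves M.planted.v M.planted.e M.planted.root = ∅ :=
    Set.eq_empty_of_forall_notMem fun y hy => hy.2.2 (hM.planted_v_eq_self_iff.1 hy.2.1)
  refine ⟨t, ht, List.eq_nil_iff_forall_not_mem.2 fun x => ?_,
    (hreads.ciso_toMap ht hM.isLeafedMap_planted hM.sameComponent_planted).symm⟩
  rw [hfree, hnone, Set.image_empty]
  exact Set.notMem_empty x

theorem card_of_planted_ciso_toMap {M : CMap} {t : Term} (ht : t.IsLinear) (hfree : t.freeList = [])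
    (h : CIso M.planted t.toMap) : Nat.card M.carrier + 3 = 3 * t.size := by
  obtain ⟨f, -⟩ := h
  have hfin : Finite ((M.carrier ⊕ Bool) ⊕ Bool) := Finite.of_equiv t.Dart f.symm
  have : Finite (M.carrier ⊕ Bool) := .of_injective _ (Sum.inl_injective (β := Bool))
  have : Finite M.carrier := .of_injective _ (Sum.inl_injective (β := Bool))
  have hcard : Nat.card ((M.carrier ⊕ Bool) ⊕ Bool) = Nat.card t.Dart := Nat.card_congr f
  rw [ht.card_dart, hfree, Nat.card_sum, Nat.card_sum, Nat.card_eq_fintype_card (α := Bool),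
    Fintype.card_bool, List.length_nil] at hcard
  lia

theorem alpha_nil_iff_ciso {M M' : CMap} {t t' : Term} (hM : IsCMap M) (hM' : IsCMap M')
    (ht : t.IsLinear) (ht' : t'.IsLinear) (hfree : t.freeList = []) (hfree' : t'.freeList = [])
    (h : CIso M.planted t.toMap) (h' : CIso M'.planted t'.toMap) :
    Alpha ([], t) ([], t') ↔ CIso M M' := by
  rw [alpha_nil_iff, ← Term.ciso_toMap_iff ht ht' hfree hfree']
  exact ⟨fun hiso => .of_planted hM hM' ((h.trans hiso).trans h'.symm),
    fun hiso => (h.symm.trans hiso.planted).trans h'⟩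

theorem ClosedLin.val_eq {n : ℕ} (p : ClosedLin n) : p.1 = ([], p.1.2) :=
  Prod.ext p.2.2.1 rfl

theorem ClosedLin.isLinear_and_freeList_eq_nil {n : ℕ} (p : ClosedLin n) :
    p.1.2.IsLinear ∧ p.1.2.freeList = [] :=
  linear_nil_iff.1 (by simpa only [p.2.2.1] using p.2.1)

theorem card_quot_eq_of_rel {α β : Type*} {r : α → α → Prop} {s : β → β → Prop}
    (hs : Equivalence s) (R : α → β → Prop) (hleft : ∀ a, ∃ b, R a b) (hright : ∀ b, ∃ a, R a b)
    (hR : ∀ {a a' b b'}, R a b → R a' b' → (r a a' ↔ s b b')) :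
    Nat.card (Quot r) = Nat.card (Quot s) := by
  choose F hF using hleft
  refine Nat.card_congr (.ofBijective
    (Quot.map F fun a a' h => (hR (hF a) (hF a')).1 h) ⟨?_, ?_⟩)
  · rintro ⟨a⟩ ⟨a'⟩ h
    exact Quot.sound ((hR (hF a) (hF a')).2 (hs.quot_mk_eq_iff _ _ |>.1 h))
  · rintro ⟨b⟩
    obtain ⟨a, ha⟩ := hright b
    exact ⟨Quot.mk r a, Quot.sound ((hR (hF a) ha).1 ((hR ha ha).2 (hs.refl b)))⟩

/-- For every `n > 1`, the number of alpha-equivalence classes of closed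
linear lambda terms with `n` total applications and abstractions equals the
number of isomorphism classes of classical rooted trivalent maps with
`n - 1` trivalent vertices. -/
theorem card_closed_terms_eq_card_classical_maps :
    ∀ n : ℕ, 1 < n →
      Nat.card (Quot (fun a b : ClosedLin n => Alpha a.val b.val)) =
      Nat.card (Quot (fun A B : ClassicalRTM (n - 1) => CIso A.val B.val)) := by
  intro n hn
  refine card_quot_eq_of_rel (CIso.equivalence.comap Subtype.val)
    (fun p A => CIso A.1.planted p.1.2.toMap) (fun p => ?_) (fun A => ?_) fun {p q A B} hA hB => ?_
  · obtain ⟨ht, hfree⟩ := p.isLinear_and_freeList_eq_nil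
    have hsize : p.1.2.size = n := p.2.2.2
    obtain ⟨M, hM, hiso⟩ := Term.exists_planted_ciso_toMap ht hfree (hn.trans_eq hsize.symm)
    have hcard := card_of_planted_ciso_toMap ht hfree hiso
    exact ⟨⟨M, hM, by lia⟩, hiso⟩
  · obtain ⟨M, hM, hsize⟩ := A
    have : Finite M.carrier := Nat.finite_of_card_ne_zero (by lia)
    obtain ⟨t, ht, hfree, hiso⟩ := hM.exists_planted_ciso_toMap
    have hcard := card_of_planted_ciso_toMap ht hfree hiso
    exact ⟨⟨([], t), linear_nil_iff.2 ⟨ht, hfree⟩, rfl, by lia⟩, hiso⟩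
  · obtain ⟨hp, hpfree⟩ := p.isLinear_and_freeList_eq_nil
    obtain ⟨hq, hqfree⟩ := q.isLinear_and_freeList_eq_nil
    rw [p.val_eq, q.val_eq]
    exact alpha_nil_iff_ciso A.2.1 B.2.1 hp hq hpfree hqfree hA hB
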